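/- Let I ⊆ ℝ be a nontrivial interval, U ⊆ ℝ^m open, g: U → ℝ^{m×m} a smooth map with values in symmetric positive-definite matrices, and Φ: I × U × ℝ^m → ℝ^m continuous. Let v: I → U be absolutely continuous on compact subintervals with derivative v̇(τ) defined almost everywhere and square-integrable on compact subintervals, and suppose that for some fixed τ₀ ∈ I the function p(τ) := g(v(τ)) v̇(τ) satisfies, for almost every τ ∈ I, p(τ) = p(τ₀) + ∫_{τ₀}^{τ} Φ(s, v(s), v̇(s)) ds, the integrand being locally integrable on I. Then v is twice continuously differentiable on I, and d/dτ [ g(v(τ)) v̇(τ) ] = Φ(τ, v(τ), v̇(τ)) holds for every τ ∈ I. -/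

import Mathlib

/-!
The momentum `p τ = p₀ + ∫ s in τ₀..τ, Φ (s, v s, v' s)` is continuous and `g (v) v' = p` a.e., so
`v'` agrees a.e. with the continuous function `g (v)⁻¹ p`, and the fundamental theorem of calculus
makes `v` a `C¹` curve with `g (v) v̇ = p` everywhere. Replacing `v'` by `v̇` under the integral
shows that `p` is `C¹` with `ṗ = Φ (τ, v, v̇)`; hence `v̇ = g (v)⁻¹ p` is `C¹` as well.
-/

open MeasureTheory Real Set

/-- Euclidean dot product on `ℝ^n`. -/
def dotp {n : ℕ} (a b : Fin n → ℝ) : ℝ := ∑ i, a i * b i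

open Filter Topology

section Order

variable {α : Type*} [TopologicalSpace α] [LinearOrder α]

lemma exists_Ici_mem_nhdsWithin [ClosedIicTopology α] {s : Set α} {x : α} (hx : x ∈ s) :
    ∃ a ∈ s, Ici a ∈ 𝓝[s] x := by
  by_cases h : ∃ a ∈ s, a < x
  · obtain ⟨a, ha, hax⟩ := h
    exact ⟨a, ha, mem_nhdsWithin_of_mem_nhds (Ici_mem_nhds hax)⟩
  · push Not at h
    exact ⟨x, hx, eventually_nhdsWithin_of_forall h⟩

lemma exists_Icc_mem_nhdsWithin [OrderClosedTopology α] {s : Set α} {x : α} (hx : x ∈ s) :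
    ∃ a ∈ s, ∃ b ∈ s, Icc a b ∈ 𝓝[s] x := by
  obtain ⟨a, ha, hax⟩ := exists_Ici_mem_nhdsWithin hx
  obtain ⟨b, hb, hxb⟩ := exists_Ici_mem_nhdsWithin (α := αᵒᵈ) hx
  exact ⟨a, ha, b, hb, inter_mem hax hxb⟩

end Order

section Primitive

variable {E : Type*} [NormedAddCommGroup E] [NormedSpace ℝ E] {I : Set ℝ} {f f' w : ℝ → E}
  {c : E} {t₀ t : ℝ}

lemma ftcFilter_nhdsWithin (hI : I.OrdConnected) (ht : t ∈ I) :
    intervalIntegral.FTCFilter t (𝓝[I] t) (𝓝[I] t) :=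
  have : TendstoIxxClass Ioc (𝓟 I) (𝓟 I) :=
    tendstoIxxClass_principal.2 fun _ ha _ hb => Ioc_subset_Icc_self.trans (hI.out ha hb)
  { tendstoIxxClass_inf with
    pure_le := pure_le_nhdsWithin ht
    le_nhds := nhdsWithin_le_nhds
    meas_gen := hI.measurableSet.nhdsWithin_isMeasurablyGenerated t }

lemma continuousOn_integral_of_intervalIntegrable
    (hf : ∀ a ∈ I, ∀ b ∈ I, IntervalIntegrable f volume a b) (ht₀ : t₀ ∈ I) :
    ContinuousOn (fun t => ∫ s in t₀..t, f s) I := by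
  intro t ht
  obtain ⟨a, ha, b, hb, hab⟩ := exists_Icc_mem_nhdsWithin ht
  refine ContinuousWithinAt.mono_of_mem_nhdsWithin ?_ hab
  exact intervalIntegral.continuousWithinAt_primitive (measure_singleton t) <|
    hf _ (min_rec' (· ∈ I) ht₀ ha) _ (max_rec' (· ∈ I) ht₀ hb)

lemma continuousOn_integral_of_locallyIntegrableOn (hI : I.OrdConnected)
    (hf : LocallyIntegrableOn f I) (ht₀ : t₀ ∈ I) :
    ContinuousOn (fun t => ∫ s in t₀..t, f s) I :=
  continuousOn_integral_of_intervalIntegrable (fun _ ha _ hb =>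
    (hf.integrableOn_compact_subset (hI.uIcc_subset ha hb)
      isCompact_uIcc).intervalIntegrable) ht₀

lemma hasDerivWithinAt_integral_of_continuousOn [CompleteSpace E] (hI : I.OrdConnected)
    (hf : ContinuousOn f I) (ht₀ : t₀ ∈ I) (ht : t ∈ I) :
    HasDerivWithinAt (fun t => ∫ s in t₀..t, f s) (f t) I t :=
  have := ftcFilter_nhdsWithin hI ht
  intervalIntegral.integral_hasDerivWithinAt_right
    (hf.mono (hI.uIcc_subset ht₀ ht)).intervalIntegrable
    (hf.stronglyMeasurableAtFilter_nhdsWithin hI.measurableSet t) (hf t ht)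

lemma hasDerivWithinAt_of_eq_add_integral_of_ae_eq [CompleteSpace E] (hI : I.OrdConnected)
    (hf : ∀ t ∈ I, f t = c + ∫ s in t₀..t, f' s) (hf' : ∀ᵐ s ∂volume.restrict I, f' s = w s)
    (hw : ContinuousOn w I) (ht₀ : t₀ ∈ I) (ht : t ∈ I) :
    HasDerivWithinAt f (w t) I t := by
  have hfw : ∀ t ∈ I, f t = c + ∫ s in t₀..t, w s := by
    intro t ht
    rw [hf t ht, intervalIntegral.integral_congr_ae]
    filter_upwards [(ae_restrict_iff' hI.measurableSet).1 hf'] with s hs hst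
    exact hs (hI.uIcc_subset ht₀ ht (uIoc_subset_uIcc hst))
  exact ((hasDerivWithinAt_integral_of_continuousOn hI hw ht₀ ht).const_add c).congr hfw (hfw t ht)

lemma continuousOn_of_forall_eq_add_integral
    (hf : ∀ a ∈ I, ∀ b ∈ I, f b = f a + ∫ s in a..b, f' s) : ContinuousOn f I := by
  by_cases hint : ∀ a ∈ I, ∀ b ∈ I, IntervalIntegrable f' volume a b
  · intro a ha
    exact (continuousOn_const.add (continuousOn_integral_of_intervalIntegrable hint ha)).congr
      (hf a ha) a ha
  · -- The Bochner integral of a non-integrable function is `0`, which forces `f` to be constant.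
    push Not at hint
    obtain ⟨a, ha, b, hb, hab⟩ := hint
    have f_eq : ∀ x ∈ I, ∀ y ∈ I, ¬ IntervalIntegrable f' volume x y → f y = f x := by
      intro x hx y hy hxy
      rw [hf x hx y hy, intervalIntegral.integral_undef hxy, add_zero]
    refine (continuousOn_const (c := f a)).congr fun x hx => ?_
    by_cases hax : IntervalIntegrable f' volume a x
    · have hxb : ¬ IntervalIntegrable f' volume x b := fun hxb => hab (hax.trans hxb)
      exact (f_eq x hx b hb hxb).symm.trans (f_eq a ha b hb hab)
    · exact f_eq a ha x hx hax

end Primitive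

section ContDiff

variable {𝕜 : Type*} [NontriviallyNormedField 𝕜]

lemma contDiffOn_add_one_of_hasDerivWithinAt {E : Type*} [NormedAddCommGroup E] [NormedSpace 𝕜 E]
    {k : ℕ∞} {s : Set 𝕜} {f f' : 𝕜 → E} (hs : UniqueDiffOn 𝕜 s)
    (hf : ∀ t ∈ s, HasDerivWithinAt f (f' t) s t) (hf' : ContDiffOn 𝕜 k f' s) :
    ContDiffOn 𝕜 (k + 1) f s :=
  (contDiffOn_succ_iff_derivWithin hs).2
    ⟨fun t ht => (hf t ht).differentiableWithinAt, by simp,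
      hf'.congr fun t ht => (hf t ht).derivWithin (hs t ht)⟩

lemma contDiffOn_inverse_apply {D E F : Type*} [NormedAddCommGroup D] [NormedSpace 𝕜 D]
    [NormedAddCommGroup E] [NormedSpace 𝕜 E] [CompleteSpace E] [NormedAddCommGroup F]
    [NormedSpace 𝕜 F] {k : WithTop ℕ∞} {s : Set D} {A : D → E →L[𝕜] F} {p : D → F}
    (hA : ContDiffOn 𝕜 k A s) (hinv : ∀ t ∈ s, (A t).IsInvertible) (hp : ContDiffOn 𝕜 k p s) :
    ContDiffOn 𝕜 k (fun t => (A t).inverse (p t)) s :=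
  ContDiffOn.clm_apply
    (fun t ht => (hinv t ht).contDiffAt_map_inverse.comp_contDiffWithinAt t (hA t ht)) hp

end ContDiff

section Matrix

variable {𝕜 m n : Type*} [NontriviallyNormedField 𝕜] [CompleteSpace 𝕜] [Fintype m] [Fintype n]

lemma contDiffOn_mulVecLin {D : Type*} [NormedAddCommGroup D] [NormedSpace 𝕜 D]
    {k : WithTop ℕ∞} {s : Set D} {A : D → Matrix m n 𝕜}
    (hA : ∀ i j, ContDiffOn 𝕜 k (fun x => A x i j) s) :
    ContDiffOn 𝕜 k (fun x => (A x).mulVecLin.toContinuousLinearMap) s :=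
  contDiffOn_clm_apply.2 fun _ => contDiffOn_pi.2 fun i =>
    ContDiffOn.sum fun j _ => (hA i j).mul contDiffOn_const

lemma isInvertible_mulVecLin_of_isUnit_det [DecidableEq n] {A : Matrix n n 𝕜} (hA : IsUnit A.det) :
    A.mulVecLin.toContinuousLinearMap.IsInvertible :=
  .of_inverse (g := A⁻¹.mulVecLin.toContinuousLinearMap)
    (by ext1 y; simp [Matrix.mulVec_mulVec, A.mul_nonsing_inv hA])
    (by ext1 y; simp [Matrix.mulVec_mulVec, A.nonsing_inv_mul hA])

end Matrix

section Lagrangian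

variable {E F : Type*} [NormedAddCommGroup E] [NormedSpace ℝ E] [CompleteSpace E]
  [NormedAddCommGroup F] [NormedSpace ℝ F] {I : Set ℝ} {U : Set E} {g : E → E →L[ℝ] F}
  {v v' : ℝ → E} {p : ℝ → F}

lemma contDiffOn_one_and_apply_derivWithin_eq (hI : I.OrdConnected) (hIu : UniqueDiffOn ℝ I)
    (hg : ContinuousOn g U) (hginv : ∀ x ∈ U, (g x).IsInvertible) (hvU : MapsTo v I U)
    (hv : ∀ a ∈ I, ∀ t ∈ I, v t = v a + ∫ s in a..t, v' s) (hp : ContinuousOn p I)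
    (hgp : ∀ᵐ τ ∂volume.restrict I, g (v τ) (v' τ) = p τ) :
    ContDiffOn ℝ 1 v I ∧ ∀ τ ∈ I, g (v τ) (derivWithin v I τ) = p τ := by
  have hinv : ∀ τ ∈ I, (g (v τ)).IsInvertible := fun τ hτ => hginv _ (hvU hτ)
  let w : ℝ → E := fun τ => (g (v τ)).inverse (p τ)
  have hv'w : ∀ᵐ τ ∂volume.restrict I, v' τ = w τ := by
    filter_upwards [hgp, ae_restrict_mem hI.measurableSet] with τ hτ hτI
    exact ((hinv τ hτI).inverse_apply_eq.2 hτ.symm).symm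
  have hvc : ContinuousOn v I := continuousOn_of_forall_eq_add_integral hv
  have hw : ContDiffOn ℝ 0 w I :=
    contDiffOn_inverse_apply (contDiffOn_zero.2 (hg.comp hvc hvU)) hinv (contDiffOn_zero.2 hp)
  have hvd : ∀ τ ∈ I, HasDerivWithinAt v (w τ) I τ := fun τ hτ =>
    hasDerivWithinAt_of_eq_add_integral_of_ae_eq hI (hv τ hτ) hv'w hw.continuousOn hτ hτ
  refine ⟨contDiffOn_add_one_of_hasDerivWithinAt (k := 0) hIu hvd hw, fun τ hτ => ?_⟩
  rw [(hvd τ hτ).derivWithin (hIu τ hτ), (hinv τ hτ).self_apply_inverse]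

lemma contDiffOn_two_of_apply_derivWithin_eq (hIu : UniqueDiffOn ℝ I)
    (hg : ContDiffOn ℝ 1 g U) (hginv : ∀ x ∈ U, (g x).IsInvertible) (hvU : MapsTo v I U)
    (hv : ContDiffOn ℝ 1 v I) (hp : ContDiffOn ℝ 1 p I)
    (hgp : ∀ τ ∈ I, g (v τ) (derivWithin v I τ) = p τ) :
    ContDiffOn ℝ 2 v I := by
  have hinv : ∀ τ ∈ I, (g (v τ)).IsInvertible := fun τ hτ => hginv _ (hvU hτ)
  have hdv : ContDiffOn ℝ 1 (derivWithin v I) I :=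
    (contDiffOn_inverse_apply (hg.comp hv hvU) hinv hp).congr fun τ hτ =>
      ((hinv τ hτ).inverse_apply_eq.2 (hgp τ hτ).symm).symm
  exact contDiffOn_add_one_of_hasDerivWithinAt (k := 1) hIu
    (fun τ hτ => (hv.differentiableOn one_ne_zero τ hτ).hasDerivWithinAt) hdv

theorem stmt8_general [CompleteSpace F] (hI : I.OrdConnected) (hIne : I.Nontrivial)
    (hg : ContDiffOn ℝ 1 g U) (hginv : ∀ x ∈ U, (g x).IsInvertible)
    {Φ : ℝ × E × E → F} (hΦ : ContinuousOn Φ (I ×ˢ U ×ˢ univ)) (hvU : MapsTo v I U)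
    (hv : ∀ a ∈ I, ∀ t ∈ I, v t = v a + ∫ s in a..t, v' s) {τ₀ : ℝ} (hτ₀ : τ₀ ∈ I)
    (hΦint : LocallyIntegrableOn (fun s => Φ (s, v s, v' s)) I) {p₀ : F}
    (hgp : ∀ᵐ τ ∂volume.restrict I, g (v τ) (v' τ) = p₀ + ∫ s in τ₀..τ, Φ (s, v s, v' s)) :
    ContDiffOn ℝ 2 v I ∧
      ∀ τ ∈ I, HasDerivWithinAt (fun σ => g (v σ) (derivWithin v I σ))
        (Φ (τ, v τ, derivWithin v I τ)) I τ := by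
  have hIu : UniqueDiffOn ℝ I :=
    uniqueDiffOn_convex hI.convex (hI.convex.nontrivial_iff_nonempty_interior.1 hIne)
  let p : ℝ → F := fun τ => p₀ + ∫ s in τ₀..τ, Φ (s, v s, v' s)
  have hpc : ContinuousOn p I :=
    continuousOn_const.add (continuousOn_integral_of_locallyIntegrableOn hI hΦint hτ₀)
  obtain ⟨hv1, hgdv⟩ : ContDiffOn ℝ 1 v I ∧ ∀ τ ∈ I, g (v τ) (derivWithin v I τ) = p τ :=
    contDiffOn_one_and_apply_derivWithin_eq hI hIu hg.continuousOn hginv hvU hv hpc hgp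
  have hv'dv : ∀ᵐ τ ∂volume.restrict I, v' τ = derivWithin v I τ := by
    filter_upwards [hgp, ae_restrict_mem hI.measurableSet] with τ hτ hτI
    exact (hginv _ (hvU hτI)).injective (hτ.trans (hgdv τ hτI).symm)
  have hΦc : ContinuousOn (fun τ => Φ (τ, v τ, derivWithin v I τ)) I :=
    hΦ.comp (continuousOn_id.prodMk
      (hv1.continuousOn.prodMk (hv1.continuousOn_derivWithin hIu le_rfl)))
      fun τ hτ => ⟨hτ, hvU hτ, mem_univ _⟩
  have hpd : ∀ τ ∈ I, HasDerivWithinAt p (Φ (τ, v τ, derivWithin v I τ)) I τ := fun τ =>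
    hasDerivWithinAt_of_eq_add_integral_of_ae_eq hI (fun _ _ => rfl)
      (hv'dv.mono fun τ hτ => by rw [hτ]) hΦc hτ₀
  have hp1 : ContDiffOn ℝ 1 p I :=
    contDiffOn_add_one_of_hasDerivWithinAt (k := 0) hIu hpd (contDiffOn_zero.2 hΦc)
  exact ⟨contDiffOn_two_of_apply_derivWithin_eq hIu hg hginv hvU hv1 hp1 hgdv,
    fun τ hτ => (hpd τ hτ).congr hgdv (hgdv τ hτ)⟩

end Lagrangian

/-- Regularity: if `v` is locally absolutely continuous on a nontrivial interval `I`
with locally square-integrable derivative `v'`, and the momentum `p = g(v)v'` satisfies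
the integral identity `p(τ) = p(τ₀) + ∫_{τ₀}^{τ} Φ(s,v(s),v'(s)) ds` a.e., then `v` is
twice continuously differentiable on `I` and `d/dτ[g(v)v̇] = Φ(τ,v,v̇)` everywhere on `I`. -/
theorem stmt8 {m : ℕ} (I : Set ℝ) (hI : I.OrdConnected) (hIne : I.Nontrivial)
    (U : Set (Fin m → ℝ)) (hU : IsOpen U)
    (g : (Fin m → ℝ) → Matrix (Fin m) (Fin m) ℝ)
    (hg : ∀ i j, ContDiffOn ℝ (⊤ : ℕ∞) (fun y => g y i j) U)
    (hgpos : ∀ x ∈ U, (g x).PosDef)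
    (Φ : ℝ × (Fin m → ℝ) × (Fin m → ℝ) → (Fin m → ℝ))
    (hΦ : ContinuousOn Φ (I ×ˢ U ×ˢ (Set.univ : Set (Fin m → ℝ))))
    (v v' : ℝ → (Fin m → ℝ)) (hvU : ∀ τ ∈ I, v τ ∈ U)
    -- `v` is absolutely continuous on compact subintervals with a.e. derivative `v'`:
    (hAC : ∀ a ∈ I, ∀ t ∈ I, v t = v a + ∫ s in a..t, v' s)
    -- `v'` is square-integrable on compact subintervals:
    (hL2 : ∀ a ∈ I, ∀ b ∈ I, IntegrableOn (fun s => dotp (v' s) (v' s)) (Set.uIcc a b))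
    (τ₀ : ℝ) (hτ₀ : τ₀ ∈ I)
    (hΦint : LocallyIntegrableOn (fun s => Φ (s, v s, v' s)) I)
    (hp : ∀ᵐ τ ∂(volume.restrict I),
      Matrix.mulVec (g (v τ)) (v' τ)
        = Matrix.mulVec (g (v τ₀)) (v' τ₀) + ∫ s in τ₀..τ, Φ (s, v s, v' s)) :
    ContDiffOn ℝ 2 v I ∧
      ∀ τ ∈ I, HasDerivWithinAt
        (fun σ : ℝ => Matrix.mulVec (g (v σ)) (derivWithin v I σ))
        (Φ (τ, v τ, derivWithin v I τ)) I τ :=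
  stmt8_general hI hIne (contDiffOn_mulVecLin fun i j => (hg i j).of_le (by simp))
    (fun x hx => isInvertible_mulVecLin_of_isUnit_det (hgpos x hx).det_pos.ne'.isUnit)
    hΦ hvU hAC hτ₀ hΦint hp
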